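/- arXiv:2603.04561 — 2 statements merged into one kernel-verified Lean document; each statement's English description precedes it below -/
import Mathlib

section
/- Let φ : Cl ≃ Matrix (Fin 2^r) ℂ be any ℂ-algebra isomorphism with Φ the induced isomorphism of Cl ⊗ Cl onto Matrix ((Fin 2^r) × (Fin 2^r)) ℂ. Then Tr Φ(P_k) = 2·(2r)!/(k!(2r−k)!) for every k with 0 ≤ k ≤ r−1, and Tr Φ(P_r) = (2r)!/(r!)^2. -/
open scoped TensorProduct

noncomputable section

/-- The quadratic form `x₁² + ⋯ + x_{2r}²` on `ℂ^{2r}`. -/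
def Qf (r : ℕ) : QuadraticForm ℂ (Fin (2*r) → ℂ) :=
  QuadraticMap.weightedSumSquares ℂ (fun _ : Fin (2*r) => (1:ℂ))

/-- The Clifford algebra of `Qf r`. -/
abbrev Cl (r : ℕ) := CliffordAlgebra (Qf r)

/-- The generators `Γ_i`. -/
def Γgen (r : ℕ) (i : Fin (2*r)) : Cl r :=
  CliffordAlgebra.ι (Qf r) (Pi.single i 1)

/-- The antisymmetrised products `Γ_{[i₁…i_k]}`. -/
def Γbr (r k : ℕ) (i : Fin k → Fin (2*r)) : Cl r :=
  ((k.factorial : ℂ))⁻¹ •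
    ∑ σ : Equiv.Perm (Fin k),
      ((Equiv.Perm.sign σ : ℤ) : ℂ) • (List.ofFn fun j => Γgen r (i (σ j))).prod

/-- The invariants `I_k ∈ Cl ⊗ Cl`. -/
def Ik (r k : ℕ) : Cl r ⊗[ℂ] Cl r :=
  ∑ i : Fin k → Fin (2*r), (Γbr r k i) ⊗ₜ[ℂ] (Γbr r k i)

/-- The split Casimir element `Ĉ = −I₂/(16(2r−2))`. -/
def sC (r : ℕ) : Cl r ⊗[ℂ] Cl r := (-(16*(2*(r:ℂ)-2))⁻¹) • Ik r 2

/-- The top element `Γ_{2r+1} = (−i)^r Γ₁⋯Γ_{2r}`. -/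
def Γtop (r : ℕ) : Cl r :=
  ((-Complex.I)^r) • (List.ofFn fun i : Fin (2*r) => Γgen r i).prod

/-- The chirality projector `p_ε = (1 + ε Γ_{2r+1})/2`. -/
def pCh (r : ℕ) (ε : ℂ) : Cl r := (2:ℂ)⁻¹ • (1 + ε • Γtop r)

/-- The chirality projectors `p_{εε'} = p_ε ⊗ p_{ε'}`. -/
def ppCh (r : ℕ) (ε ε' : ℂ) : Cl r ⊗[ℂ] Cl r := (pCh r ε) ⊗ₜ[ℂ] (pCh r ε')

/-- The eigenvalues `c_k = (2k(2r−k) − r(2r−1))/(16(r−1))`. -/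
def cEv (r k : ℕ) : ℂ :=
  (2*(k:ℂ)*(2*(r:ℂ)-(k:ℂ)) - (r:ℂ)*(2*(r:ℂ)-1)) / (16*((r:ℂ)-1))

/-- The spectral projectors `P_k = Π_{j≠k} (Ĉ − c_j)/(c_k − c_j)`. -/
def Pk (r k : ℕ) : Cl r ⊗[ℂ] Cl r :=
  (((List.range (r+1)).filter (fun j => j ≠ k)).map
    (fun j => (cEv r k - cEv r j)⁻¹ • (sC r - cEv r j • 1))).prod

/-- `P_r^S = (p_{++} + p_{−−})·P_r`. -/
def PrS (r : ℕ) : Cl r ⊗[ℂ] Cl r := (ppCh r 1 1 + ppCh r (-1) (-1)) * Pk r r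

/-- The ascending factorial `a_k(u) = (u/2)(u/2+1)⋯(u/2+k−1)`. -/
def asc (u : ℂ) (k : ℕ) : ℂ := ∏ j ∈ Finset.range k, (u/2 + (j:ℂ))

open Polynomial in
/-- A linear functional on a commutative algebra that kills all nontrivial products of a family of
involutions evaluates polynomials in their sum by averaging over all sign patterns. -/
theorem trace_aeval_sum_involutions {ι B : Type*} [Fintype ι] [DecidableEq ι] [CommRing B]
    [Algebra ℂ B] (a : ι → B) (ha : ∀ i, a i * a i = 1) (τ : B →ₗ[ℂ] ℂ)
    (h1 : τ 1 = 2 ^ Fintype.card ι) (h0 : ∀ T : Finset ι, T.Nonempty → τ (∏ i ∈ T, a i) = 0)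
    (p : ℂ[X]) :
    τ (aeval (∑ i, a i) p) =
      ∑ T : Finset ι, p.eval ((Fintype.card ι : ℂ) - 2 * (T.card : ℂ)) := by
  set s : Finset ι → ι → ℂ := fun T i => if i ∈ T then -1 else 1 with hs
  set E : Finset ι → B := fun T => ∏ i, (algebraMap ℂ B 2⁻¹ * (1 + algebraMap ℂ B (s T i) * a i))
    with hE
  have h2 : algebraMap ℂ B 2⁻¹ + algebraMap ℂ B 2⁻¹ = 1 := by
    rw [← map_add, ← map_one (algebraMap ℂ B)]; norm_num
  have hsum : ∑ T, E T = 1 := by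
    have := Finset.prod_add (fun i => algebraMap ℂ B 2⁻¹ * (1 - a i))
      (fun i => algebraMap ℂ B 2⁻¹ * (1 + a i)) (Finset.univ : Finset ι)
    have h3 : ∀ i, algebraMap ℂ B 2⁻¹ * (1 - a i) + algebraMap ℂ B 2⁻¹ * (1 + a i) = 1 := by
      intro i; linear_combination h2
    simp only [h3, Finset.prod_const_one, Finset.powerset_univ] at this
    rw [this]
    refine Finset.sum_congr rfl fun T _ => ?_
    simp only [hE]
    rw [← Finset.prod_mul_prod_compl T, ← Finset.compl_eq_univ_sdiff]
    congr 1
    · refine Finset.prod_congr rfl fun i hi => ?_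
      simp [hs, hi, sub_eq_add_neg]
    · refine Finset.prod_congr rfl fun i hi => ?_
      simp [hs, Finset.mem_compl.1 hi]
  have hss : ∀ T i, s T i * s T i = 1 := by
    intro T i; simp only [hs]; split_ifs <;> norm_num
  have hmul : ∀ T i, a i * E T = algebraMap ℂ B (s T i) * E T := by
    intro T i
    simp only [hE]
    rw [← Finset.mul_prod_erase _ _ (Finset.mem_univ i)]
    have h4 : algebraMap ℂ B (s T i) * algebraMap ℂ B (s T i) = 1 := by
      rw [← map_mul, hss, map_one]
    simp only [← mul_assoc]
    congr 1
    linear_combination algebraMap ℂ B 2⁻¹ * (algebraMap ℂ B (s T i) * ha i - a i * h4)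
  have hcard : ∀ T, ∑ i, s T i = (Fintype.card ι : ℂ) - 2 * (T.card : ℂ) := by
    intro T
    have : ∀ i, s T i = 1 - 2 * (if i ∈ T then 1 else 0) := by
      intro i; simp only [hs]; split_ifs <;> norm_num
    simp only [this, Finset.sum_sub_distrib, ← Finset.mul_sum]
    simp
  have hS : ∀ T, (∑ i, a i) * E T
      = algebraMap ℂ B ((Fintype.card ι : ℂ) - 2 * (T.card : ℂ)) * E T := by
    intro T
    rw [Finset.sum_mul, ← hcard, map_sum, Finset.sum_mul]
    exact Finset.sum_congr rfl fun i _ => hmul T i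
  have hp : ∀ T, aeval (∑ i, a i) p * E T
      = algebraMap ℂ B (p.eval ((Fintype.card ι : ℂ) - 2 * (T.card : ℂ))) * E T := by
    intro T
    induction p using Polynomial.induction_on' with
    | add p q hp hq => simp only [map_add, eval_add, add_mul, hp, hq]
    | monomial n c =>
      simp only [aeval_monomial, eval_monomial, map_mul, map_pow, mul_assoc]
      congr 1
      induction n with
      | zero => simp
      | succ n ih =>
        rw [pow_succ, mul_assoc, hS, mul_left_comm, ih, pow_succ]; ring
  have hτ : ∀ T, τ (E T) = 1 := by
    intro T
    have h5 : E T = ∑ U : Finset ι, ((2⁻¹ : ℂ) ^ Fintype.card ι * ∏ i ∈ U, s T i) • ∏ i ∈ U, a i := by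
      simp only [hE]
      rw [Finset.prod_mul_distrib, Finset.prod_one_add, Finset.powerset_univ, Finset.mul_sum]
      refine Finset.sum_congr rfl fun U _ => ?_
      rw [Finset.prod_mul_distrib, Algebra.smul_def, map_mul, map_pow, map_prod]
      simp [mul_assoc]
    rw [h5, map_sum, Finset.sum_eq_single ∅]
    · simp [h1]
    · intro U _ hU
      rw [map_smul, h0 U (Finset.nonempty_iff_ne_empty.2 hU), smul_zero]
    · simp
  rw [← mul_one (aeval _ p), ← hsum, Finset.mul_sum, map_sum]
  refine Finset.sum_congr rfl fun T _ => ?_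
  rw [hp, ← Algebra.smul_def, map_smul, hτ, smul_eq_mul, mul_one]

open Polynomial in
/-- The noncommutative version, where the vanishing of the functional on products comes from
elements anticommuting with all but one of the involutions. -/
theorem trace_aeval_sum_of_anticommute {ι M : Type*} [Fintype ι] [DecidableEq ι] [Ring M]
    [Algebra ℂ M] (hcard : Even (Fintype.card ι)) (A G : ι → M) (hA : ∀ i, A i * A i = 1)
    (hcomm : ∀ i j, A i * A j = A j * A i) (hG : ∀ i, G i * G i = 1)
    (hGA : ∀ i, G i * A i = A i * G i) (hGA' : ∀ i j, i ≠ j → G i * A j = -(A j * G i))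
    (τ : M →ₗ[ℂ] ℂ) (hτ : ∀ x y, τ (x * y) = τ (y * x))
    (h1 : τ 1 = 2 ^ Fintype.card ι) (p : ℂ[X]) :
    τ (aeval (∑ i, A i) p) =
      ∑ T : Finset ι, p.eval ((Fintype.card ι : ℂ) - 2 * (T.card : ℂ)) := by
  let B := Algebra.adjoin ℂ (Set.range A)
  have hB : IsMulCommutative B := Algebra.isMulCommutative_adjoin ℂ (by
    rintro _ ⟨i, rfl⟩ _ ⟨j, rfl⟩; exact hcomm i j)
  let : CommRing B := { B.toRing with mul_comm := hB.is_comm.comm }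
  let a : ι → B := fun i => ⟨A i, Algebra.subset_adjoin ⟨i, rfl⟩⟩
  have hconj : ∀ (i : ι) (T : Finset ι),
      G i * ((∏ j ∈ T, a j : B) : M) = (-1) ^ (T.erase i).card * ((∏ j ∈ T, a j : B) : M) * G i := by
    intro i T
    induction T using Finset.induction_on with
    | empty => simp
    | insert j T hj ih =>
      rw [Finset.prod_insert hj]
      have e : ((a j * ∏ x ∈ T, a x : B) : M) = A j * ((∏ x ∈ T, a x : B) : M) := rfl
      rw [e, ← mul_assoc]
      have hc : A j * (-1) ^ (T.erase i).card = (-1) ^ (T.erase i).card * A j :=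
        ((Commute.neg_one_right (A j)).pow_right _).eq
      by_cases hij : i = j
      · subst hij
        rw [hGA, mul_assoc, ih, Finset.erase_insert_eq_erase]
        simp only [← mul_assoc, hc]
      · rw [hGA' i j hij, neg_mul, mul_assoc, ih, Finset.erase_insert_of_ne (Ne.symm hij),
          Finset.card_insert_of_notMem (by simp [hj]), pow_succ]
        simp only [← mul_assoc, hc]
        simp
  have hzero : ∀ (i : ι) (T : Finset ι), Odd (T.erase i).card →
      τ ((∏ j ∈ T, a j : B) : M) = 0 := by
    intro i T ho
    have h := hconj i T
    rw [ho.neg_one_pow] at h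
    set x := ((∏ j ∈ T, a j : B) : M)
    have : τ x = - τ x := by
      calc τ x = τ (x * G i * G i) := by rw [mul_assoc, hG, mul_one]
        _ = τ (G i * (x * G i)) := hτ _ _
        _ = τ (-x * G i * G i) := by rw [← mul_assoc, h]; simp
        _ = - τ x := by rw [mul_assoc, hG, mul_one, map_neg]
    exact self_eq_neg.1 this
  have key := trace_aeval_sum_involutions a (fun i => Subtype.ext (hA i))
    (τ ∘ₗ B.val.toLinearMap) h1 (fun T hT => ?_) p
  · rw [← key]
    have : (∑ i, A i) = B.val (∑ i, a i) := by rw [map_sum]; rfl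
    rw [this, aeval_algHom_apply]; rfl
  · rcases Nat.even_or_odd T.card with he | ho
    · obtain ⟨i, hi⟩ := hT
      refine hzero i T ?_
      rw [Finset.card_erase_of_mem hi]
      exact Nat.Even.sub_odd (Finset.card_pos.2 ⟨i, hi⟩) he odd_one
    · have : ∃ i, i ∉ T := by
        by_contra! h
        rw [Finset.eq_univ_iff_forall.2 h, Finset.card_univ] at ho
        exact Nat.not_even_iff_odd.2 ho hcard
      obtain ⟨i, hi⟩ := this
      exact hzero i T (by rwa [Finset.erase_eq_of_notMem hi])

theorem Γgen_sq (r : ℕ) (i : Fin (2*r)) : Γgen r i * Γgen r i = 1 := by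
  have h : Qf r (Pi.single i 1) = 1 := by
    simp [Qf, QuadraticMap.weightedSumSquares_apply, Pi.single_apply]
  rw [Γgen, CliffordAlgebra.ι_sq_scalar, h, map_one]

theorem Γgen_anticomm (r : ℕ) {i j : Fin (2*r)} (h : i ≠ j) :
    Γgen r i * Γgen r j = -(Γgen r j * Γgen r i) := by
  rw [eq_neg_iff_add_eq_zero, Γgen, Γgen, CliffordAlgebra.ι_mul_ι_add_swap]
  convert map_zero (algebraMap ℂ (Cl r))
  simp [QuadraticMap.polar, Qf, QuadraticMap.weightedSumSquares_apply, Pi.single_apply, mul_add,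
    Finset.sum_add_distrib, h, h.symm]

theorem Γbr_two (r : ℕ) (i : Fin 2 → Fin (2*r)) :
    Γbr r 2 i = if i 0 = i 1 then 0 else Γgen r (i 0) * Γgen r (i 1) := by
  have h : Γbr r 2 i = (2:ℂ)⁻¹ • (Γgen r (i 0) * Γgen r (i 1) - Γgen r (i 1) * Γgen r (i 0)) := by
    have hperm : (Finset.univ : Finset (Equiv.Perm (Fin 2))) = {1, Equiv.swap 0 1} := by decide
    rw [Γbr, hperm, Finset.sum_pair (by decide)]
    simp [List.ofFn_succ, sub_eq_add_neg]
  rw [h]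
  split_ifs with e
  · rw [e, sub_self, smul_zero]
  · rw [Γgen_anticomm r (Ne.symm e), sub_neg_eq_add, ← two_smul ℂ (_ * _), smul_smul]
    norm_num

theorem Ik_two (r : ℕ) :
    Ik r 2 = (∑ i, Γgen r i ⊗ₜ[ℂ] Γgen r i) ^ 2 - (2 * r : ℂ) • 1 := by
  have h : ∀ i j : Fin (2*r), (Γbr r 2 ![i, j]) ⊗ₜ[ℂ] (Γbr r 2 ![i, j])
      = (Γgen r i ⊗ₜ[ℂ] Γgen r i) * (Γgen r j ⊗ₜ[ℂ] Γgen r j)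
        - if i = j then 1 else 0 := by
    intro i j
    rw [Γbr_two]
    by_cases e : i = j
    · subst e
      simp [Algebra.TensorProduct.tmul_mul_tmul, Γgen_sq, Algebra.TensorProduct.one_def]
    · simp [e]
  rw [Ik, ← (finTwoArrowEquiv (Fin (2*r))).symm.sum_comp, Fintype.sum_prod_type]
  simp only [finTwoArrowEquiv_symm_apply, h, Finset.sum_sub_distrib]
  rw [pow_two, Finset.sum_mul_sum]
  congr 1
  rw [show (2 * r : ℂ) = ((2 * r : ℕ) : ℂ) by push_cast; rfl, Nat.cast_smul_eq_nsmul]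
  simp

theorem cEv_injOn (r : ℕ) (hr : 2 ≤ r) {j k : ℕ} (hj : j ≤ r) (hk : k ≤ r)
    (h : cEv r j = cEv r k) : j = k := by
  have hr0 : (16*((r:ℂ)-1)) ≠ 0 := by
    refine mul_ne_zero (by norm_num) (sub_ne_zero.2 ?_)
    exact_mod_cast (by omega : r ≠ 1)
  rw [cEv, cEv, div_left_inj' hr0] at h
  have h' : ((j:ℂ) - k) * (2 * r - j - k) = 0 := by linear_combination h / 2
  rcases mul_eq_zero.1 h' with h' | h'
  · exact_mod_cast sub_eq_zero.1 h'
  · have : (2 * r : ℂ) = j + k := by linear_combination h'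
    have : 2 * r = j + k := by exact_mod_cast this
    omega

theorem cEv_symm (r m : ℕ) (hm : m ≤ 2 * r) : cEv r (2 * r - m) = cEv r m := by
  rw [cEv, cEv, Nat.cast_sub hm]; push_cast; ring

theorem cEv_eq (r : ℕ) (hr : 2 ≤ r) (m : ℕ) :
    -(16*(2*(r:ℂ)-2))⁻¹ * ((((2 * r : ℕ) : ℂ) - 2 * m) ^ 2 - 2 * r) = cEv r m := by
  have hr0 : (r:ℂ) - 1 ≠ 0 := sub_ne_zero.2 (by exact_mod_cast (by omega : r ≠ 1))
  have hr1 : 2 * (r:ℂ) - 2 ≠ 0 := by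
    rw [show 2 * (r:ℂ) - 2 = 2 * (r - 1) by ring]; exact mul_ne_zero two_ne_zero hr0
  rw [cEv]; push_cast; field_simp; ring

/-- Lagrange interpolation at the eigenvalues selects `k` and `2r - k`. -/
theorem prod_cEv (r : ℕ) (hr : 2 ≤ r) {k m : ℕ} (hk : k ≤ r) (hm : m ≤ 2 * r) :
    (((List.range (r+1)).filter (fun j => j ≠ k)).map
      (fun j => (cEv r k - cEv r j)⁻¹ * (cEv r m - cEv r j))).prod
      = if m = k ∨ m = 2 * r - k then 1 else 0 := by
  split_ifs with h
  · have e : cEv r m = cEv r k := by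
      rcases h with rfl | rfl
      · rfl
      · exact cEv_symm r k (by omega)
    refine List.prod_eq_one ?_
    simp only [List.mem_map, List.mem_filter, List.mem_range, decide_eq_true_eq]
    rintro x ⟨j, ⟨hj, hjk⟩, rfl⟩
    rw [e]
    refine inv_mul_cancel₀ (sub_ne_zero.2 fun h => hjk ?_)
    exact (cEv_injOn r hr hk (by omega) h).symm
  · push Not at h
    refine List.prod_eq_zero ?_
    simp only [List.mem_map, List.mem_filter, List.mem_range, decide_eq_true_eq]
    rcases le_total m r with hmr | hmr
    · exact ⟨m, ⟨by omega, h.1⟩, by simp⟩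
    · exact ⟨2 * r - m, ⟨by omega, by omega⟩, by rw [cEv_symm r m hm]; simp⟩

open Polynomial in
theorem trace_Pk (r : ℕ) (hr : 2 ≤ r) {k : ℕ} (hk : k ≤ r) (τ : Cl r ⊗[ℂ] Cl r →ₗ[ℂ] ℂ)
    (hτ : ∀ x y, τ (x * y) = τ (y * x)) (h1 : τ 1 = 2 ^ (2 * r)) :
    τ (Pk r k) = ∑ m ∈ Finset.range (2 * r + 1),
      if m = k ∨ m = 2 * r - k then ((2 * r).choose m : ℂ) else 0 := by
  set q : ℂ[X] := C (-(16*(2*(r:ℂ)-2))⁻¹) * (X ^ 2 - C (2 * r : ℂ)) with hq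
  set p : ℂ[X] := (((List.range (r+1)).filter (fun j => j ≠ k)).map
    (fun j => C (cEv r k - cEv r j)⁻¹ * (q - C (cEv r j)))).prod with hp
  have haq : aeval (∑ i, Γgen r i ⊗ₜ[ℂ] Γgen r i) q = sC r := by
    rw [hq, sC, Ik_two, map_mul, aeval_C, ← Algebra.smul_def, map_sub, map_pow, aeval_X, aeval_C,
      Algebra.algebraMap_eq_smul_one]
  have hPk : Pk r k = aeval (∑ i, Γgen r i ⊗ₜ[ℂ] Γgen r i) p := by
    rw [hp, map_list_prod, List.map_map, Pk]
    congr 2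
    funext j
    rw [Function.comp_apply, map_mul, aeval_C, ← Algebra.smul_def, map_sub, aeval_C, haq,
      Algebra.algebraMap_eq_smul_one]
  have heval : ∀ m ≤ 2 * r, p.eval (((2 * r : ℕ) : ℂ) - 2 * m)
      = if m = k ∨ m = 2 * r - k then 1 else 0 := by
    intro m hm
    rw [← prod_cEv r hr hk hm, hp, ← coe_evalRingHom, map_list_prod, List.map_map]
    congr 2
    funext j
    rw [← cEv_eq r hr m]
    simp [hq]
  rw [hPk, trace_aeval_sum_of_anticommute (by simp) _ (fun i => Γgen r i ⊗ₜ[ℂ] 1)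
    (fun i => ?_) (fun i j => ?_) (fun i => ?_) (fun i => ?_) (fun i j h => ?_) τ hτ
    (by simpa using h1),
    ← Finset.powerset_univ, Finset.sum_powerset_apply_card
      (fun m => p.eval ((Fintype.card (Fin (2 * r)) : ℂ) - 2 * (m : ℂ)))]
  · simp only [Finset.card_univ, Fintype.card_fin]
    refine Finset.sum_congr rfl fun m hm => ?_
    rw [heval m (by simpa [Nat.lt_succ_iff] using hm)]
    simp
  · simp [Γgen_sq, Algebra.TensorProduct.one_def]
  · by_cases h : i = j
    · rw [h]
    · simp [Γgen_anticomm r h, TensorProduct.neg_tmul, TensorProduct.tmul_neg]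
  · simp [Γgen_sq, Algebra.TensorProduct.one_def]
  · simp
  · simp [Γgen_anticomm r h, TensorProduct.neg_tmul]

/-- traces of the spectral projectors `P_k` of `Ĉ`. -/
theorem Pk_traces (r : ℕ) (hr : 2 ≤ r)
    (φ : Cl r ≃ₐ[ℂ] Matrix (Fin (2^r)) (Fin (2^r)) ℂ)
    (Φ : Cl r ⊗[ℂ] Cl r →ₐ[ℂ] Matrix (Fin (2^r) × Fin (2^r)) (Fin (2^r) × Fin (2^r)) ℂ)
    (hΦ : ∀ a b : Cl r, Φ (a ⊗ₜ[ℂ] b) = Matrix.kroneckerMap (· * ·) (φ a) (φ b)) :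
    (∀ k : ℕ, k ≤ r - 1 →
      Matrix.trace (Φ (Pk r k))
        = 2 * ((2*r).factorial : ℂ) / ((k.factorial : ℂ) * ((2*r-k).factorial : ℂ))) ∧
    Matrix.trace (Φ (Pk r r)) = ((2*r).factorial : ℂ) / ((r.factorial : ℂ))^2 := by
  have key : ∀ k ≤ r, Matrix.trace (Φ (Pk r k)) = ∑ m ∈ Finset.range (2 * r + 1),
      if m = k ∨ m = 2 * r - k then ((2 * r).choose m : ℂ) else 0 := fun k hk =>
    trace_Pk r hr hk (Matrix.traceLinearMap _ ℂ ℂ ∘ₗ Φ.toLinearMap)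
      (fun x y => by simp [Matrix.trace_mul_comm (Φ x)])
      (by simp [two_mul, pow_add])
  refine ⟨fun k hk => ?_, ?_⟩
  · rw [key k (by omega), ← Finset.sum_filter]
    have : (Finset.range (2 * r + 1)).filter (fun m => m = k ∨ m = 2 * r - k)
        = {k, 2 * r - k} := by
      ext m; simp only [Finset.mem_filter, Finset.mem_range, Finset.mem_insert,
        Finset.mem_singleton]; omega
    rw [this, Finset.sum_pair (by omega), Nat.choose_symm (by omega),
      Nat.cast_choose ℂ (by omega : k ≤ 2 * r)]
    ring
  · rw [key r le_rfl, ← Finset.sum_filter]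
    have : (Finset.range (2 * r + 1)).filter (fun m => m = r ∨ m = 2 * r - r) = {r} := by
      ext m; simp only [Finset.mem_filter, Finset.mem_range, Finset.mem_singleton]; omega
    rw [this, Finset.sum_singleton, Nat.cast_choose ℂ (by omega : r ≤ 2 * r),
      show 2 * r - r = r by omega, pow_two]

end
end

section
/- For every integer k with 0 ≤ k ≤ r the following identity holds in Cl ⊗ Cl: I_{2k}·P_r^S = (−1)^k·(2k)!·binom(r,k)·P_r^S, where P_r^S := (p_{+1,+1} + p_{−1,−1})·P_r. -/
open scoped TensorProduct

noncomputable section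

section DistinctSum

open Function

variable {α : Type*} [Fintype α] [DecidableEq α]

/-- A sum over injective tuples, split according to the `j`-th entry. -/
lemma sum_injective_insertNth {M : Type*} [AddCommMonoid M] {k : ℕ} (j : Fin (k + 1))
    (F : (Fin (k + 1) → α) → M) :
    ∑ f : Fin (k + 1) → α with Injective f, F f =
      ∑ g : Fin k → α with Injective g, ∑ a ∈ (Finset.univ.image g)ᶜ, F (j.insertNth a g) := by
  rw [Finset.sum_filter, ← (Fin.insertNthEquiv (fun _ => α) j).sum_comp,
    Fintype.sum_prod_type_right, Finset.sum_filter]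
  refine Finset.sum_congr rfl fun g _ => ?_
  have key (a : α) : Injective (j.insertNth a g : Fin (k + 1) → α) ↔
      Injective g ∧ a ∈ (Finset.univ.image g)ᶜ := by
    simp only [Finset.mem_compl, Finset.mem_image, Finset.mem_univ, true_and, not_exists]
    constructor
    · intro h
      refine ⟨fun x y hxy => ?_, fun x hx => ?_⟩
      · exact Fin.succAbove_right_injective (p := j) (h (by simpa using hxy))
      · exact Fin.succAbove_ne j x (h (by simpa using hx))
    · rintro ⟨hg, ha⟩ x y
      rcases Fin.eq_self_or_eq_succAbove j x with hx | ⟨x, rfl⟩ <;>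
      rcases Fin.eq_self_or_eq_succAbove j y with hy | ⟨y, rfl⟩
      · simp [hx, hy]
      · simpa [hx] using fun h => (ha y h.symm).elim
      · simpa [hy] using fun h => (ha x h).elim
      · simpa using fun h => hg h
  simp only [Fin.insertNthEquiv, Equiv.coe_fn_mk, key]
  by_cases hg : Injective g
  · simp [hg, Finset.sum_ite_mem, -Finset.mem_compl]
  · simp [hg]

variable {B : Type*} [CommRing B]

/-- The sum of `t (f 0) ⋯ t (f (k - 1))` over injective tuples `f`, that is, `k!` times the
`k`-th elementary symmetric function of the family `t`. -/
def distinctSum (t : α → B) (k : ℕ) : B :=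
  ∑ f : Fin k → α with Injective f, ∏ j, t (f j)

lemma distinctSum_zero (t : α → B) : distinctSum t 0 = 1 := by
  simp [distinctSum, Finset.filter_true_of_mem, injective_of_subsingleton]

lemma distinctSum_succ (t : α → B) (k : ℕ) :
    distinctSum t (k + 1) = (∑ a, t a) * distinctSum t k -
      ∑ f : Fin k → α with Injective f, ∑ j, t (f j) * ∏ l, t (f l) := by
  rw [distinctSum, sum_injective_insertNth 0, distinctSum, Finset.mul_sum,
    ← Finset.sum_sub_distrib]
  refine Finset.sum_congr rfl fun g hg => ?_
  have hg : Injective g := (Finset.mem_filter.mp hg).2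
  have h := Finset.sum_compl_add_sum (Finset.univ.image g) t
  rw [Finset.sum_image fun x _ y _ h => hg h] at h
  simp only [Fin.prod_univ_succ, Fin.insertNth_zero', Fin.cons_zero, Fin.cons_succ]
  rw [← Finset.sum_mul, ← Finset.sum_mul, ← h]
  ring

lemma distinctSum_one (t : α → B) : distinctSum t 1 = ∑ a, t a := by
  simp [distinctSum_succ, distinctSum_zero]

lemma distinctSum_add_two (t : α → B) (ht : ∀ a, t a * t a = 1) (k : ℕ) :
    distinctSum t (k + 2) = (∑ a, t a) * distinctSum t (k + 1) -
      ((k : B) + 1) * ((Fintype.card α : B) - k) * distinctSum t k := by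
  rw [distinctSum_succ, Finset.sum_comm]
  congr 1
  have h (j : Fin (k + 1)) :
      ∑ f : Fin (k + 1) → α with Injective f, t (f j) * ∏ l, t (f l) =
        ((Fintype.card α : B) - k) * distinctSum t k := by
    rw [sum_injective_insertNth j, distinctSum, Finset.mul_sum]
    refine Finset.sum_congr rfl fun g hg => ?_
    have hg : Injective g := (Finset.mem_filter.mp hg).2
    have hk : k ≤ Fintype.card α := by simpa using Fintype.card_le_of_injective g hg
    simp only [Fin.prod_univ_succAbove _ j, Fin.insertNth_apply_same,
      Fin.insertNth_apply_succAbove, ← mul_assoc, ht, one_mul]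
    rw [Finset.sum_const, Finset.card_compl, Finset.card_image_of_injective _ hg, nsmul_eq_mul]
    simp [Nat.cast_sub hk]
  simp only [h]
  simp [mul_assoc]

lemma distinctSum_two_mul_mul (t : α → B) (ht : ∀ a, t a * t a = 1) {r : ℕ}
    (hr : Fintype.card α = 2 * r) {p : B} (hp : (∑ a, t a) * p = 0) {k : ℕ} (hk : k ≤ r) :
    distinctSum t (2 * k) * p = (-1) ^ k * ((2 * k).factorial : B) * (r.choose k : B) * p := by
  induction k with
  | zero => simp [distinctSum_zero]
  | succ k ih =>
    have hc : ((k : B) + 1) * (r.choose (k + 1) : B) = ((r : B) - k) * (r.choose k : B) := by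
      have := congrArg (Nat.cast : ℕ → B) (Nat.choose_succ_right_eq r k)
      push_cast [Nat.cast_sub (show k ≤ r by omega)] at this
      linear_combination this
    have ih := ih (by omega)
    rw [show 2 * (k + 1) = 2 * k + 2 by ring, distinctSum_add_two t ht, hr]
    simp only [Nat.factorial_succ]
    push_cast
    linear_combination distinctSum t (2 * k + 1) * hp -
      (2 * (k : B) + 1) * (2 * r - 2 * k) * ih -
      2 * (-1) ^ (k + 1) * (2 * (k : B) + 1) * ((2 * k).factorial : B) * p * hc

end DistinctSum

section InvolutionSum

variable {α B : Type*} [CommRing B]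

lemma one_add_mul_prod_add {ι : Type*} (s : Finset ι) (x : ι → B) {t : B} (ht : t * t = 1) :
    (1 + t) * ∏ m ∈ s, (x m + t) = (1 + t) * ∏ m ∈ s, (x m + 1) := by
  classical
  induction s using Finset.induction_on with
  | empty => simp
  | insert a s ha ih =>
    rw [Finset.prod_insert ha, Finset.prod_insert ha]
    linear_combination (x a + 1) * ih + ht * ∏ m ∈ s, (x m + t)

/-- The annihilating polynomial of a sum of `n` commuting involutions. -/
lemma prod_sum_involution_eq_zero [Invertible (2 : B)] (t : α → B) (ht : ∀ a, t a * t a = 1)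
    (s : Finset α) :
    ∏ m ∈ Finset.range (s.card + 1), (∑ a ∈ s, t a - (s.card : B) + 2 * (m : B)) = 0 := by
  classical
  induction s using Finset.induction_on with
  | empty => simp
  | insert a s ha ih =>
    rw [Finset.sum_insert ha, Finset.card_insert_of_notMem ha]
    set N := ∑ a ∈ s, t a
    set n := s.card
    have hplus := one_add_mul_prod_add (Finset.range (n + 1 + 1))
      (fun m => N - ((n + 1 : ℕ) : B) + 2 * (m : B)) (ht a)
    have hminus := one_add_mul_prod_add (Finset.range (n + 1 + 1))
      (fun m => -(N - ((n + 1 : ℕ) : B) + 2 * (m : B))) (t := -t a) (by simp [ht])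
    have e1 : ∏ m ∈ Finset.range (n + 1 + 1), (N - ((n + 1 : ℕ) : B) + 2 * (m : B) + 1) = 0 := by
      rw [Finset.prod_range_succ, Finset.prod_congr rfl fun (m : ℕ) _ =>
        show N - ((n + 1 : ℕ) : B) + 2 * (m : B) + 1 = N - (n : B) + 2 * (m : B) by push_cast; ring,
        ih, zero_mul]
    have e2 : ∏ m ∈ Finset.range (n + 1 + 1),
        (-(N - ((n + 1 : ℕ) : B) + 2 * (m : B)) + 1) = 0 := by
      rw [Finset.prod_range_succ']
      have : ∏ m ∈ Finset.range (n + 1),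
          (-(N - ((n + 1 : ℕ) : B) + 2 * ((m + 1 : ℕ) : B)) + 1) =
          ∏ m ∈ Finset.range (n + 1), -(N - (n : B) + 2 * (m : B)) := by
        refine Finset.prod_congr rfl fun m _ => ?_
        push_cast; ring
      rw [this, Finset.prod_neg, ih]
      simp
    have e3 : ∏ m ∈ Finset.range (n + 1 + 1),
        (-(N - ((n + 1 : ℕ) : B) + 2 * (m : B)) + -t a) =
        (-1) ^ (n + 1 + 1) * ∏ m ∈ Finset.range (n + 1 + 1),
          (N - ((n + 1 : ℕ) : B) + 2 * (m : B) + t a) := by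
      simp only [← neg_add]
      rw [Finset.prod_neg, Finset.card_range]
    have e4 : ∏ m ∈ Finset.range (n + 1 + 1), (t a + N - ((n + 1 : ℕ) : B) + 2 * (m : B)) =
        ∏ m ∈ Finset.range (n + 1 + 1), (N - ((n + 1 : ℕ) : B) + 2 * (m : B) + t a) :=
      Finset.prod_congr rfl fun m _ => by ring
    rw [e1, mul_zero] at hplus
    rw [e2, e3, mul_zero] at hminus
    rw [e4]
    set Q := ∏ m ∈ Finset.range (n + 1 + 1), (N - ((n + 1 : ℕ) : B) + 2 * (m : B) + t a)
    have hs : ((-1 : B) ^ (n + 1 + 1)) * (-1) ^ (n + 1 + 1) = 1 := by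
      rw [← mul_pow]; simp
    have h2 : 2 * Q = 0 := by
      linear_combination hplus + (-1) ^ (n + 1 + 1) * hminus - (1 - t a) * Q * hs
    simpa using congrArg (⅟ (2 : B) * ·) h2

lemma sum_involution_mul_prod_sq_sub [Invertible (2 : B)] [Fintype α] (t : α → B)
    (ht : ∀ a, t a * t a = 1) {r : ℕ} (hr : Fintype.card α = 2 * r) :
    (∑ a, t a) * ∏ j ∈ Finset.range r, ((∑ a, t a) ^ 2 - 4 * ((r : B) - j) ^ 2) = 0 := by
  have h := prod_sum_involution_eq_zero t ht Finset.univ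
  rw [Finset.card_univ, hr, show 2 * r + 1 = r + (r + 1) by ring, Finset.prod_range_add,
    Finset.prod_range_succ'] at h
  set N := ∑ a, t a
  have hlow : ∏ j ∈ Finset.range r, (N - 2 * ((r : B) - j)) =
      ∏ j ∈ Finset.range r, (N - ((2 * r : ℕ) : B) + 2 * (j : B)) :=
    Finset.prod_congr rfl fun j _ => by push_cast; ring
  have hhigh : ∏ j ∈ Finset.range r, (N + 2 * ((r : B) - j)) =
      ∏ j ∈ Finset.range r, (N - ((2 * r : ℕ) : B) + 2 * ((r + (j + 1) : ℕ) : B)) := by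
    rw [← Finset.prod_range_reflect]
    refine Finset.prod_congr rfl fun j hj => ?_
    have : j + 1 ≤ r := Finset.mem_range.mp hj
    rw [Nat.sub_sub, add_comm 1 j, Nat.cast_sub this]
    push_cast; ring
  have hfac : ∏ j ∈ Finset.range r, (N ^ 2 - 4 * ((r : B) - j) ^ 2) =
      (∏ j ∈ Finset.range r, (N - 2 * ((r : B) - j))) *
        ∏ j ∈ Finset.range r, (N + 2 * ((r : B) - j)) := by
    rw [← Finset.prod_mul_distrib]
    exact Finset.prod_congr rfl fun j _ => by ring
  rw [hfac, hlow, hhigh, ← h]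
  push_cast; ring

end InvolutionSum

section Anticommuting

variable {A : Type*} [Ring A]

lemma prod_ofFn_swap_castSucc_succ {k : ℕ} (v : Fin (k + 1) → A)
    (hv : ∀ a b, a ≠ b → v a * v b = -(v b * v a)) (i : Fin k) :
    (List.ofFn fun j => v (Equiv.swap i.castSucc i.succ j)).prod = -(List.ofFn v).prod := by
  induction k with
  | zero => exact i.elim0
  | succ k ih =>
    cases i using Fin.cases with
    | zero =>
      have h (j : Fin k) : Equiv.swap (0 : Fin (k + 2)) 1 j.succ.succ = j.succ.succ :=
        Equiv.swap_apply_of_ne_of_ne (Fin.succ_ne_zero _)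
          (fun h => Fin.succ_ne_zero j (Fin.succ_injective _ h))
      have h01 : v 1 * v 0 = -(v 0 * v 1) := hv _ _ (by simp)
      simp [List.ofFn_succ, h, ← mul_assoc, h01]
    | succ i =>
      have h0 : Equiv.swap i.succ.castSucc i.succ.succ (0 : Fin (k + 2)) = 0 :=
        Equiv.swap_apply_of_ne_of_ne (by simp [Fin.ext_iff]) (by simp [Fin.ext_iff])
      have hs (j : Fin (k + 1)) : Equiv.swap i.succ.castSucc i.succ.succ j.succ =
          (Equiv.swap i.castSucc i.succ j).succ := by
        rw [← Fin.succ_castSucc]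
        exact (Fin.succ_injective _).swap_apply _ _ _
      have := ih (fun j => v j.succ) (fun a b hab => hv _ _ (by simpa using hab)) i
      rw [List.ofFn_succ, List.ofFn_succ (f := v), List.prod_cons, List.prod_cons, h0]
      simp only [hs, this, mul_neg]

lemma prod_ofFn_perm {k : ℕ} (σ : Equiv.Perm (Fin k)) (v : Fin k → A)
    (hv : ∀ a b, a ≠ b → v a * v b = -(v b * v a)) :
    (List.ofFn fun j => v (σ j)).prod = (Equiv.Perm.sign σ : ℤ) • (List.ofFn v).prod := by
  cases k with
  | zero => simp [Subsingleton.elim σ 1]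
  | succ k =>
    have hσ : σ ∈ Submonoid.closure
        (Set.range fun i : Fin k => Equiv.swap i.castSucc i.succ) := by
      rw [Equiv.Perm.mclosure_swap_castSucc_succ]; trivial
    induction hσ using Submonoid.closure_induction generalizing v with
    | mem σ h =>
      obtain ⟨i, rfl⟩ := h
      rw [prod_ofFn_swap_castSucc_succ v hv, Equiv.Perm.sign_swap i.castSucc_lt_succ.ne]
      simp
    | one => simp
    | mul σ τ _ _ hσ hτ =>
      have := hτ (fun j => v (σ j)) fun a b hab => hv _ _ (σ.injective.ne hab)
      simp only [Equiv.Perm.mul_apply, this, hσ v hv, smul_smul]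
      simp [mul_comm]

end Anticommuting

lemma Γgen_mul_self (r : ℕ) (i : Fin (2 * r)) : Γgen r i * Γgen r i = 1 := by
  have h : Qf r (Pi.single i 1) = 1 := by
    simp [Qf, QuadraticMap.weightedSumSquares_apply, Pi.single_apply]
  rw [Γgen, CliffordAlgebra.ι_sq_scalar, h, map_one]

lemma Γgen_mul_comm (r : ℕ) {i j : Fin (2 * r)} (hij : i ≠ j) :
    Γgen r i * Γgen r j = -(Γgen r j * Γgen r i) := by
  have h (x : Fin (2 * r)) : (Pi.single i 1 + Pi.single j 1 : Fin (2 * r) → ℂ) x *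
      (Pi.single i 1 + Pi.single j 1 : Fin (2 * r) → ℂ) x =
      (Pi.single i 1 : Fin (2 * r) → ℂ) x + (Pi.single j 1 : Fin (2 * r) → ℂ) x := by
    by_cases h1 : x = i <;> by_cases h2 : x = j <;> simp_all
  have hpolar : QuadraticMap.polar (Qf r) (Pi.single i 1) (Pi.single j 1) = 0 := by
    simp only [QuadraticMap.polar, Qf, QuadraticMap.weightedSumSquares_apply, h]
    simp [Pi.single_apply, Finset.sum_add_distrib]
  rw [eq_neg_iff_add_eq_zero, Γgen, Γgen, CliffordAlgebra.ι_mul_ι_add_swap, hpolar, map_zero]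

lemma Γbr_of_injective (r k : ℕ) {i : Fin k → Fin (2 * r)} (hi : Function.Injective i) :
    Γbr r k i = (List.ofFn fun j => Γgen r (i j)).prod := by
  have h (σ : Equiv.Perm (Fin k)) :
      ((Equiv.Perm.sign σ : ℤ) : ℂ) • (List.ofFn fun j => Γgen r (i (σ j))).prod =
        (List.ofFn fun j => Γgen r (i j)).prod := by
    rw [prod_ofFn_perm σ (fun j => Γgen r (i j)) fun a b hab => Γgen_mul_comm r (hi.ne hab),
      Int.cast_smul_eq_zsmul, smul_smul, ← Units.val_mul, Int.units_mul_self]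
    simp
  rw [Γbr, Finset.sum_congr rfl fun σ _ => h σ, Finset.sum_const, Finset.card_univ,
    Fintype.card_perm, Fintype.card_fin, ← Nat.cast_smul_eq_nsmul ℂ, smul_smul,
    inv_mul_cancel₀ (by exact_mod_cast k.factorial_ne_zero), one_smul]

lemma Γbr_of_not_injective (r k : ℕ) {i : Fin k → Fin (2 * r)} (hi : ¬ Function.Injective i) :
    Γbr r k i = 0 := by
  obtain ⟨a, b, hab, hne⟩ : ∃ a b, i a = i b ∧ a ≠ b := by
    simpa [Function.Injective] using hi
  have hi (j : Fin k) : i (Equiv.swap a b j) = i j := by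
    rw [Equiv.swap_apply_def]; split_ifs <;> simp_all
  have h : ∑ σ : Equiv.Perm (Fin k), ((Equiv.Perm.sign σ : ℤ) : ℂ) •
      (List.ofFn fun j => Γgen r (i (σ j))).prod = -∑ σ : Equiv.Perm (Fin k),
      ((Equiv.Perm.sign σ : ℤ) : ℂ) • (List.ofFn fun j => Γgen r (i (σ j))).prod := by
    refine (Equiv.sum_comp (Equiv.mulLeft (Equiv.swap a b)) _).symm.trans ?_
    simp [hi, hne]
  rw [eq_neg_iff_add_eq_zero, ← two_smul ℂ] at h
  rw [Γbr, (smul_eq_zero_iff_right two_ne_zero).mp h, smul_zero]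

/-- The commuting involutions `Γ_i ⊗ Γ_i`. -/
def Γdiag (r : ℕ) (i : Fin (2 * r)) : Cl r ⊗[ℂ] Cl r := Γgen r i ⊗ₜ[ℂ] Γgen r i

lemma Γdiag_mul_self (r : ℕ) (i : Fin (2 * r)) : Γdiag r i * Γdiag r i = 1 := by
  simp [Γdiag, Γgen_mul_self, Algebra.TensorProduct.one_def]

lemma Γdiag_mul_comm (r : ℕ) (i j : Fin (2 * r)) :
    Γdiag r i * Γdiag r j = Γdiag r j * Γdiag r i := by
  rcases eq_or_ne i j with rfl | h
  · rfl
  · simp [Γdiag, Γgen_mul_comm r h, TensorProduct.neg_tmul, TensorProduct.tmul_neg]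

lemma prod_ofFn_tmul_prod_ofFn (r : ℕ) {k : ℕ} (i : Fin k → Fin (2 * r)) :
    (List.ofFn fun j => Γgen r (i j)).prod ⊗ₜ[ℂ] (List.ofFn fun j => Γgen r (i j)).prod =
      (List.ofFn fun j => Γdiag r (i j)).prod := by
  induction k with
  | zero => simp [Algebra.TensorProduct.one_def]
  | succ k ih =>
    rw [List.ofFn_succ, List.ofFn_succ, List.prod_cons, List.prod_cons, ← ih, Γdiag,
      Algebra.TensorProduct.tmul_mul_tmul]

open scoped IsMulCommutative in
lemma exists_commRing_lift_Γdiag (r : ℕ) :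
    ∃ (B : Type) (_ : CommRing B) (_ : Algebra ℂ B) (φ : B →ₐ[ℂ] Cl r ⊗[ℂ] Cl r)
      (t : Fin (2 * r) → B), (∀ i, φ (t i) = Γdiag r i) ∧ ∀ i, t i * t i = 1 := by
  let S := Algebra.adjoin ℂ (Set.range (Γdiag r))
  have : IsMulCommutative S := Algebra.isMulCommutative_adjoin ℂ (by
    rintro _ ⟨i, rfl⟩ _ ⟨j, rfl⟩
    exact Γdiag_mul_comm r i j)
  exact ⟨S, inferInstance, S.algebra, S.val,
    fun i => ⟨Γdiag r i, Algebra.subset_adjoin ⟨i, rfl⟩⟩, fun _ => rfl,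
    fun i => Subtype.ext (Γdiag_mul_self r i)⟩

section Lift

variable {r : ℕ} {B : Type*} [CommRing B] [Algebra ℂ B] {φ : B →ₐ[ℂ] Cl r ⊗[ℂ] Cl r}
  {t : Fin (2 * r) → B}

lemma map_prod_eq_tmul (hφ : ∀ i, φ (t i) = Γdiag r i) {k : ℕ} (i : Fin k → Fin (2 * r)) :
    φ (∏ j, t (i j)) =
      (List.ofFn fun j => Γgen r (i j)).prod ⊗ₜ[ℂ] (List.ofFn fun j => Γgen r (i j)).prod := by
  rw [prod_ofFn_tmul_prod_ofFn, ← List.prod_ofFn, map_list_prod, List.map_ofFn]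
  simp [Function.comp_def, hφ]

lemma Ik_eq_map (hφ : ∀ i, φ (t i) = Γdiag r i) (k : ℕ) : Ik r k = φ (distinctSum t k) := by
  rw [distinctSum, map_sum, Finset.sum_filter, Ik]
  refine Finset.sum_congr rfl fun i _ => ?_
  split_ifs with hi
  · rw [map_prod_eq_tmul hφ, Γbr_of_injective r k hi]
  · simp [Γbr_of_not_injective r k hi]

lemma exists_ppCh_add_ppCh_eq_map (hφ : ∀ i, φ (t i) = Γdiag r i) :
    ∃ q, ppCh r 1 1 + ppCh r (-1) (-1) = φ q := by
  refine ⟨(2 : ℂ)⁻¹ • (1 + ((-Complex.I) ^ r * (-Complex.I) ^ r) • ∏ j, t j), ?_⟩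
  have h : Γtop r ⊗ₜ[ℂ] Γtop r = φ (((-Complex.I) ^ r * (-Complex.I) ^ r) • ∏ j, t j) := by
    rw [map_smul, map_prod_eq_tmul hφ fun j => j, Γtop, TensorProduct.smul_tmul_smul]
  rw [map_smul, map_add, map_one, ← h, Algebra.TensorProduct.one_def]
  simp only [ppCh, pCh, TensorProduct.smul_tmul_smul, TensorProduct.add_tmul,
    TensorProduct.tmul_add, one_smul, neg_smul, TensorProduct.neg_tmul, TensorProduct.tmul_neg]
  module

lemma exists_Pk_eq_map (hr : 2 ≤ r) (hφ : ∀ i, φ (t i) = Γdiag r i)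
    (ht : ∀ i, t i * t i = 1) : ∃ p, (∑ i, t i) * p = 0 ∧ Pk r r = φ p := by
  let _ : Invertible (2 : B) := (Invertible.map (algebraMap ℂ B) 2).copy _ (map_ofNat _ 2).symm
  have hr1 : (r : ℂ) - 1 ≠ 0 := by
    rw [sub_ne_zero]; exact_mod_cast (by omega : r ≠ 1)
  have hsC (j : ℕ) : sC r - cEv r j • 1 = φ ((-(32 * ((r : ℂ) - 1))⁻¹) •
      ((∑ i, t i) ^ 2 - 4 * ((r : B) - j) ^ 2)) := by
    have h2 := distinctSum_add_two t ht 0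
    rw [zero_add, distinctSum_one, distinctSum_zero, Fintype.card_fin] at h2
    rw [sC, Ik_eq_map hφ, ← map_one φ, ← map_smul, ← map_smul, ← map_sub, h2]
    congr 1
    have e : cEv r j = (32 * ((r : ℂ) - 1))⁻¹ * (2 * r - 4 * (r - j) ^ 2) := by
      rw [cEv]; field_simp; ring
    have e' : (16 * (2 * (r : ℂ) - 2))⁻¹ = (32 * ((r : ℂ) - 1))⁻¹ := by
      congr 1; ring
    rw [e, e']
    simp only [Algebra.smul_def, map_mul, map_sub, map_neg, map_natCast, map_ofNat, map_pow]
    push_cast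
    ring
  refine ⟨∏ j ∈ Finset.range r, (cEv r r - cEv r j)⁻¹ • (-(32 * ((r : ℂ) - 1))⁻¹) •
      ((∑ i, t i) ^ 2 - 4 * ((r : B) - j) ^ 2), ?_, ?_⟩
  · simp only [smul_smul]
    rw [Finset.prod_smul, mul_smul_comm,
      sum_involution_mul_prod_sq_sub t ht (Fintype.card_fin _), smul_zero]
  · have hl : (List.range (r + 1)).filter (fun j => j ≠ r) = List.range r := by
      rw [List.range_succ, List.filter_append, List.filter_eq_self.mpr]
      · simp
      · intro a ha
        simpa using (List.mem_range.mp ha).ne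
    rw [Pk, hl]
    simp only [hsC, ← map_smul]
    refine Eq.trans ?_ (map_list_prod φ ((List.range r).map fun j => (cEv r r - cEv r j)⁻¹ •
      (-(32 * ((r : ℂ) - 1))⁻¹) • ((∑ i, t i) ^ 2 - 4 * ((r : B) - j) ^ 2))).symm
    rw [List.map_map]
    rfl

end Lift

/-- `I_{2k}·P_r^S = (−1)^k·(2k)!·C(r,k)·P_r^S` for `0 ≤ k ≤ r`. -/
theorem Ik_mul_PrS (r : ℕ) (hr : 2 ≤ r) (k : ℕ) (hk : k ≤ r) :
    Ik r (2*k) * PrS r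
      = ((-1:ℂ)^k * (((2*k).factorial : ℕ) : ℂ) * ((r.choose k : ℕ) : ℂ)) • PrS r := by
  obtain ⟨B, _, _, φ, t, hφ, ht⟩ := exists_commRing_lift_Γdiag r
  obtain ⟨q, hq⟩ := exists_ppCh_add_ppCh_eq_map hφ
  obtain ⟨p, hp, hP⟩ := exists_Pk_eq_map hr hφ ht
  have h := distinctSum_two_mul_mul t ht (Fintype.card_fin _) hp hk
  rw [PrS, hq, hP, Ik_eq_map hφ, ← map_mul, ← map_mul, ← map_smul]
  congr 1
  simp only [Algebra.smul_def, map_mul, map_pow, map_neg, map_one, map_natCast]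
  linear_combination q * h

end
end
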